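/- arXiv:1605.02571 — 3 statements merged into one kernel-verified Lean document; each statement's English description precedes it below -/
import Mathlib

section
/- Let X be a Tychonoff separably λ-submetrizable space and let λ, μ ∈ Ψ with μ ⊆ λ. If the bitopological space (C(X), τ_μ, τ_λ) is M_{(τ_μ,τ_λ)}-separable and is a (τ_μ,τ_λ)-Pytkeev bispace, then it is R_{(τ_μ,τ_λ)}-separable. -/
open Set Filter Topology TopologicalSpace ContinuousMap

/-- A subset `A` of `X` is *C-compact* if `f '' A` is compact in `ℝ` for every
continuous real-valued function `f` on `X`. -/
def IsCCompact {X : Type*} [TopologicalSpace X] (A : Set X) : Prop :=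
  ∀ f : C(X, ℝ), IsCompact (f '' A)

/-- The `λ`-open (set-open) topology on `C(X, ℝ)`, generated by the subbasic sets
`[F, U] = {f : f '' F ⊆ U}` for `F ∈ lam` and `U ⊆ ℝ` open. -/
def setOpenTopology {X : Type*} [TopologicalSpace X] (lam : Set (Set X)) :
    TopologicalSpace C(X, ℝ) :=
  TopologicalSpace.generateFrom
    {S | ∃ F ∈ lam, ∃ U : Set ℝ, IsOpen U ∧ S = {f : C(X, ℝ) | f '' F ⊆ U}}

/-- Membership in the collection `Ψ`: a family of nonempty closed C-compact subsets of `X`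
forming a π-network, hereditary with respect to (closed) C-compact subsets of its elements,
and maximal among families of nonempty sets inducing the same set-open topology. -/
structure MemPsi {X : Type*} [TopologicalSpace X] (lam : Set (Set X)) : Prop where
  nonempty : ∀ A ∈ lam, A.Nonempty
  closed : ∀ A ∈ lam, IsClosed A
  ccompact : ∀ A ∈ lam, IsCCompact A
  piNetwork : ∀ U : Set X, IsOpen U → U.Nonempty → ∃ A ∈ lam, A ⊆ U
  hereditary : ∀ A ∈ lam, ∀ B : Set X, B ⊆ A → B.Nonempty → IsClosed B → IsCCompact B →
    B ∈ lam
  maximal : ∀ lam' : Set (Set X), (∀ A ∈ lam', A.Nonempty) →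
    setOpenTopology lam' = setOpenTopology lam → lam' ⊆ lam

/-- A cozero (functional open) subset of `X`: the complement of a zero-set. -/
def IsCozero {X : Type*} [TopologicalSpace X] (U : Set X) : Prop :=
  ∃ f : C(X, ℝ), U = {x | f x ≠ 0}

/-- `𝒰` is a `λ`-f-cover: a family of cozero sets, not containing `X`, such that every
member of `lam` is contained in some member of `𝒰`. -/
def IsFCover {X : Type*} [TopologicalSpace X] (lam : Set (Set X)) (𝒰 : Set (Set X)) : Prop :=
  (Set.univ : Set X) ∉ 𝒰 ∧ (∀ U ∈ 𝒰, IsCozero U) ∧ ∀ A ∈ lam, ∃ U ∈ 𝒰, A ⊆ U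

/-- `Λ(λ)`: the collection of all `λ`-f-covers of `X`. -/
def fCovers {X : Type*} [TopologicalSpace X] (lam : Set (Set X)) : Set (Set (Set X)) :=
  {𝒰 | IsFCover lam 𝒰}

/-- The selection principle `S₁(𝒜, ℬ)`. -/
def S1 {α : Type*} (𝒜 ℬ : Set (Set α)) : Prop :=
  ∀ A : ℕ → Set α, (∀ n, A n ∈ 𝒜) →
    ∃ b : ℕ → α, (∀ n, b n ∈ A n) ∧ Set.range b ∈ ℬ

/-- The selection principle `S_fin(𝒜, ℬ)`. -/
def Sfin {α : Type*} (𝒜 ℬ : Set (Set α)) : Prop :=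
  ∀ A : ℕ → Set α, (∀ n, A n ∈ 𝒜) →
    ∃ B : ℕ → Set α, (∀ n, (B n).Finite ∧ B n ⊆ A n) ∧ (⋃ n, B n) ∈ ℬ

/-- `Ω_y` with respect to the topology `t`: sets having `y` in their closure but not
containing `y`. -/
def OmegaPt {Y : Type*} (t : TopologicalSpace Y) (y : Y) : Set (Set Y) :=
  {A | y ∈ @closure Y t A ∧ y ∉ A}

/-- Countable `(t₁, t₂)`-tightness of a bitopological space. -/
def CountableBiTightness {Y : Type*} (t1 t2 : TopologicalSpace Y) : Prop :=
  ∀ A : Set Y, ∀ f ∈ @closure Y t1 A, ∃ B ⊆ A, B.Countable ∧ f ∈ @closure Y t2 B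

/-- `X` is `λ`-`μ`-Lindelöf: every `λ`-f-cover has a countable subfamily which is a
`μ`-f-cover. -/
def LamMuLindelof {X : Type*} [TopologicalSpace X] (lam mu : Set (Set X)) : Prop :=
  ∀ 𝒰 : Set (Set X), IsFCover lam 𝒰 → ∃ 𝒱 ⊆ 𝒰, 𝒱.Countable ∧ IsFCover mu 𝒱

/-- Countable `(t₁, t₂)`-T-tightness: for every uncountable regular cardinal `κ` and every
increasing `κ`-indexed sequence of `t₁`-closed sets, the union is `t₂`-closed. -/
def CountableBiTTightness {Y : Type*} (t1 t2 : TopologicalSpace Y) : Prop :=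
  ∀ κ : Cardinal.{0}, Cardinal.aleph0 < κ → κ.IsRegular →
    ∀ A : κ.ord.ToType → Set Y, Monotone A → (∀ α, @IsClosed Y t1 (A α)) →
      @IsClosed Y t2 (⋃ α, A α)

/-- `X` is separably `λ`-submetrizable: there is a continuous map of `X` onto a separable
metric space which is one-to-one on `⋃ lam`. -/
def SeparablyLamSubmetrizable (X : Type*) [TopologicalSpace X] (lam : Set (Set X)) : Prop :=
  ∃ (Y : Type) (m : MetricSpace Y),
    @SeparableSpace Y m.toPseudoMetricSpace.toUniformSpace.toTopologicalSpace ∧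
    ∃ f : X → Y,
      @Continuous X Y _ m.toPseudoMetricSpace.toUniformSpace.toTopologicalSpace f ∧
      Function.Surjective f ∧ Set.InjOn f (⋃₀ lam)

/-- `R`-separability for a pair of topologies: from every sequence of `t₁`-dense sets one
can pick single points forming a `t₂`-dense set. -/
def RSepBi {Y : Type*} (t1 t2 : TopologicalSpace Y) : Prop :=
  ∀ D : ℕ → Set Y, (∀ n, @Dense Y t1 (D n)) →
    ∃ d : ℕ → Y, (∀ n, d n ∈ D n) ∧ @Dense Y t2 (Set.range d)

/-- `M`-separability for a pair of topologies. -/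
def MSepBi {Y : Type*} (t1 t2 : TopologicalSpace Y) : Prop :=
  ∀ D : ℕ → Set Y, (∀ n, @Dense Y t1 (D n)) →
    ∃ F : ℕ → Set Y, (∀ n, (F n).Finite ∧ F n ⊆ D n) ∧ @Dense Y t2 (⋃ n, F n)

/-- `H`-separability for a pair of topologies. -/
def HSepBi {Y : Type*} (t1 t2 : TopologicalSpace Y) : Prop :=
  ∀ D : ℕ → Set Y, (∀ n, @Dense Y t1 (D n)) →
    ∃ F : ℕ → Set Y, (∀ n, (F n).Finite ∧ F n ⊆ D n) ∧
      ∀ G : Set Y, @IsOpen Y t2 G → G.Nonempty →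
        ∀ᶠ n in Filter.atTop, (G ∩ F n).Nonempty

/-- A countable set `D` is groupable with respect to the topology `t`. -/
def GroupableIn {Y : Type*} (t : TopologicalSpace Y) (D : Set Y) : Prop :=
  ∃ A : ℕ → Set Y, (∀ n, (A n).Finite) ∧ D = ⋃ n, A n ∧
    ∀ G : Set Y, @IsOpen Y t G → G.Nonempty →
      ∀ᶠ n in Filter.atTop, (G ∩ A n).Nonempty

/-- `GN`-separability for a pair of topologies. -/
def GNSepBi {Y : Type*} (t1 t2 : TopologicalSpace Y) : Prop :=
  ∀ D : ℕ → Set Y, (∀ n, @Dense Y t1 (D n)) →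
    ∃ d : ℕ → Y, (∀ n, d n ∈ D n) ∧ @Dense Y t2 (Set.range d) ∧
      GroupableIn t2 (Set.range d)

/-- The `(t₁, t₂)`-Pytkeev property for a bitopological space. -/
def PytkeevBi {Y : Type*} (t1 t2 : TopologicalSpace Y) : Prop :=
  ∀ A : Set Y, ∀ g ∈ @closure Y t1 A, g ∉ A →
    ∃ B : ℕ → Set Y, (∀ n, (B n).Infinite ∧ B n ⊆ A) ∧
      ∀ G ∈ @nhds Y t2 g, ∃ n, B n ⊆ G

/-- A groupable `μ`-f-cover. -/
def GroupableFCover {X : Type*} [TopologicalSpace X] (mu 𝒱 : Set (Set X)) : Prop :=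
  𝒱.Countable ∧ IsFCover mu 𝒱 ∧
    ∃ G : ℕ → Set (Set X), (∀ m, (G m).Finite) ∧
      (Pairwise fun m k => Disjoint (G m) (G k)) ∧ 𝒱 = ⋃ m, G m ∧
      ∀ F ∈ mu, ∀ᶠ m in Filter.atTop, ∃ U ∈ G m, F ⊆ U

/-!
`M`-separability yields a countable `t₂`-dense set, so, after splitting the given sequence of
`t₁`-dense sets into countably many subsequences, it suffices to select from each subsequence so as
to have one prescribed point `s` in the `t₂`-closure of the selection. `M`-separability provides
finite sets `F n` whose union has `s` in its closure. If `s` is in no `F n`, the Pytkeev property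
gives a countable `π`-network at `s` of infinite subsets of `⋃ n, F n`; since the `F n` are finite,
each of these subsets meets infinitely many of them, so one can pick a point of the `k`-th subset in
`F (φ k)` with `φ` injective.
-/

theorem infinite_setOf_inter_nonempty {α ι : Type*} {B : Set α} {F : ι → Set α}
    (hB : B.Infinite) (hF : ∀ i, (F i).Finite) (hBF : B ⊆ ⋃ i, F i) :
    {i | (B ∩ F i).Nonempty}.Infinite := by
  refine fun hfin => hB ((hfin.biUnion fun i _ => hF i).subset fun y hy => ?_)
  obtain ⟨i, hi⟩ := mem_iUnion.1 (hBF hy)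
  exact mem_biUnion (show i ∈ {i | (B ∩ F i).Nonempty} from ⟨y, hy, hi⟩) hi

theorem exists_strictMono_forall_inter_nonempty {α : Type*} {B F : ℕ → Set α}
    (hB : ∀ k, (B k).Infinite) (hF : ∀ n, (F n).Finite) (hBF : ∀ k, B k ⊆ ⋃ n, F n) :
    ∃ φ : ℕ → ℕ, StrictMono φ ∧ ∀ k, (B k ∩ F (φ k)).Nonempty :=
  extraction_forall_of_frequently fun k =>
    Nat.frequently_atTop_iff_infinite.2 (infinite_setOf_inter_nonempty (hB k) hF (hBF k))

theorem exists_selection_range_subset {α ι κ : Type*} {E : ι → Set α} (hE : ∀ i, (E i).Nonempty)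
    {φ : κ → ι} (hφ : φ.Injective) {x : κ → α} (hx : ∀ k, x k ∈ E (φ k)) :
    ∃ d : ι → α, (∀ i, d i ∈ E i) ∧ range x ⊆ range d := by
  choose c hc using hE
  refine ⟨Function.extend φ x c, fun i => ?_, ?_⟩
  · by_cases hi : ∃ k, φ k = i
    · obtain ⟨k, rfl⟩ := hi
      exact (hφ.extend_apply x c k).symm ▸ hx k
    · exact (Function.extend_apply' x c i hi).symm ▸ hc i
  · rintro _ ⟨k, rfl⟩
    exact ⟨φ k, hφ.extend_apply x c k⟩

theorem PytkeevBi.exists_selection_mem_closure {Y : Type*} {t1 t2 : TopologicalSpace Y}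
    (hP : PytkeevBi t1 t2) {E F : ℕ → Set Y} (hE : ∀ n, (E n).Nonempty)
    (hF : ∀ n, (F n).Finite) (hFE : ∀ n, F n ⊆ E n) {s : Y} (hs : s ∈ closure[t1] (⋃ n, F n)) :
    ∃ d : ℕ → Y, (∀ n, d n ∈ E n) ∧ s ∈ closure[t2] (range d) := by
  by_cases hsF : s ∈ ⋃ n, F n
  · obtain ⟨n, hn⟩ := mem_iUnion.1 hsF
    obtain ⟨d, hdE, hsd⟩ := exists_selection_range_subset hE
      (Function.injective_of_subsingleton fun _ : Unit => n) (x := fun _ => s) fun _ => hFE n hn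
    exact ⟨d, hdE, subset_closure (hsd ⟨(), rfl⟩)⟩
  · obtain ⟨B, hB, hBs⟩ := hP _ s hs hsF
    obtain ⟨φ, hφ, hBφ⟩ :=
      exists_strictMono_forall_inter_nonempty (fun k => (hB k).1) hF fun k => (hB k).2
    choose x hxB hxF using hBφ
    obtain ⟨d, hdE, hxd⟩ := exists_selection_range_subset hE hφ.injective fun k => hFE _ (hxF k)
    refine ⟨d, hdE, mem_closure_iff_nhds.2 fun G hG => ?_⟩
    obtain ⟨k, hk⟩ := hBs G hG
    exact ⟨x k, hk (hxB k), hxd ⟨k, rfl⟩⟩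

theorem MSepBi.separableSpace {Y : Type*} {t1 t2 : TopologicalSpace Y} (hM : MSepBi t1 t2) :
    @SeparableSpace Y t2 := by
  obtain ⟨F, hF, hFdense⟩ := hM (fun _ => univ) fun _ => @dense_univ Y t1
  exact ⟨⋃ n, F n, countable_iUnion fun n => (hF n).1.countable, hFdense⟩

theorem exists_dense_selection_of_mem_closure {Y : Type*} [TopologicalSpace Y] {D : ℕ → Set Y}
    {s : ℕ → Y} (hs : DenseRange s)
    (h : ∀ j, ∃ d : ℕ → Y, (∀ n, d n ∈ D (Nat.pair j n)) ∧ s j ∈ closure (range d)) :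
    ∃ d : ℕ → Y, (∀ n, d n ∈ D n) ∧ Dense (range d) := by
  choose d hdD hsd using h
  refine ⟨fun m => d m.unpair.1 m.unpair.2, fun m => ?_, (hs.mono ?_).of_closure⟩
  · simpa only [Nat.pair_unpair] using hdD m.unpair.1 m.unpair.2
  · rintro _ ⟨j, rfl⟩
    refine closure_mono ?_ (hsd j)
    rintro _ ⟨n, rfl⟩
    exact ⟨Nat.pair j n, by simp only [Nat.unpair_pair]⟩

theorem mSep_pytkeev_implies_rSep_general {Y : Type*} [Nonempty Y] {t1 t2 : TopologicalSpace Y}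
    (h21 : t2 ≤ t1) (hM : MSepBi t1 t2) (hP : PytkeevBi t1 t2) : RSepBi t1 t2 := by
  intro D hD
  obtain ⟨s, hs⟩ := @exists_dense_seq Y t2 hM.separableSpace _
  refine exists_dense_selection_of_mem_closure hs fun j => ?_
  obtain ⟨F, hF, hFdense⟩ := hM (fun n => D (Nat.pair j n)) fun n => hD _
  exact hP.exists_selection_mem_closure (fun _ => @Dense.nonempty Y t1 _ _ (hD _))
    (fun n => (hF n).1) (fun n => (hF n).2) (closure.mono h21 (hFdense (s j)))

theorem setOpenTopology_antitone {X : Type*} [TopologicalSpace X] :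
    Antitone (setOpenTopology (X := X)) := by
  intro mu lam hsub
  refine generateFrom_anti ?_
  rintro _ ⟨F, hF, U, hU, rfl⟩
  exact ⟨F, hsub hF, U, hU, rfl⟩

/-- For a Tychonoff separably `λ`-submetrizable space `X` and `λ, μ ∈ Ψ` with
`μ ⊆ λ`: if `(C(X), τ_μ, τ_λ)` is `M_{(τ_μ,τ_λ)}`-separable and a `(τ_μ,τ_λ)`-Pytkeev bispace,
then it is `R_{(τ_μ,τ_λ)}`-separable. -/
theorem mSep_pytkeev_implies_rSep
    {X : Type*} [TopologicalSpace X] [T35Space X]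
    (lam mu : Set (Set X)) (hlam : MemPsi lam) (hmu : MemPsi mu) (hsub : mu ⊆ lam)
    (hsm : SeparablyLamSubmetrizable X lam)
    (hM : MSepBi (setOpenTopology mu) (setOpenTopology lam))
    (hP : PytkeevBi (setOpenTopology mu) (setOpenTopology lam)) :
    RSepBi (setOpenTopology mu) (setOpenTopology lam) :=
  mSep_pytkeev_implies_rSep_general (setOpenTopology_antitone hsub) hM hP
end

section
/- Let X be a Tychonoff separably λ-submetrizable space and λ ∈ Ψ. If C_λ(X) is M-separable and is a Pytkeev space, then C_λ(X) is R-separable. -/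
open Set Filter Topology TopologicalSpace ContinuousMap

/-!
A single-point selection `d` needs to accumulate only at each point of one countable dense set, so
by splitting `ℕ` into infinitely many infinite pieces it suffices to accumulate at one given
point `e`. M-separability yields finite `F n ⊆ D n` with dense union. If `e` belongs to no `F n`,
the Pytkeev property gives infinite sets `B k ⊆ ⋃ n, F n` such that every neighbourhood of `e`
contains some `B k`. Being infinite, each `B k` meets infinitely many of the finite sets `F n`,
so one can select a point of `B k` from `F (φ k)` with the indices `φ k` pairwise distinct.
-/

theorem exists_strictMono_inter_nonempty {Y : Type*} {B F : ℕ → Set Y}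
    (hB : ∀ k, (B k).Infinite) (hF : ∀ n, (F n).Finite) (hBF : ∀ k, B k ⊆ ⋃ n, F n) :
    ∃ φ : ℕ → ℕ, StrictMono φ ∧ ∀ k, (B k ∩ F (φ k)).Nonempty := by
  suffices hfreq : ∀ k, ∃ᶠ n in atTop, (B k ∩ F n).Nonempty from
    extraction_forall_of_frequently hfreq
  intro k
  rw [Nat.frequently_atTop_iff_infinite]
  intro hfin
  refine hB k ((hfin.biUnion fun n _ => hF n).subset fun x hx => ?_)
  obtain ⟨n, hn⟩ := mem_iUnion.mp (hBF k hx)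
  exact mem_biUnion (show (B k ∩ F n).Nonempty from ⟨x, hx, hn⟩) hn

theorem exists_selection_extending {ι κ Y : Type*} {D : κ → Set Y} (hD : ∀ n, (D n).Nonempty)
    {φ : ι → κ} (hφ : φ.Injective) {b : ι → Y} (hb : ∀ i, b i ∈ D (φ i)) :
    ∃ d : κ → Y, (∀ n, d n ∈ D n) ∧ ∀ i, d (φ i) = b i := by
  choose c hc using hD
  refine ⟨Function.extend φ b c, fun n => ?_, hφ.extend_apply b c⟩
  by_cases hn : ∃ i, φ i = n
  · obtain ⟨i, rfl⟩ := hn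
    rw [hφ.extend_apply]
    exact hb i
  · rw [Function.extend_apply' _ _ _ hn]
    exact hc n

section Bitopological

variable {Y : Type*} {t₁ t₂ t₃ : TopologicalSpace Y}

theorem PytkeevBi.closure_subset_closure (hP : PytkeevBi t₁ t₂) (A : Set Y) :
    closure[t₁] A ⊆ closure[t₂] A := by
  intro y hy
  by_cases hyA : y ∈ A
  · exact subset_closure hyA
  obtain ⟨B, hB, hBG⟩ := hP A y hy hyA
  refine mem_closure_iff_nhds.mpr fun G hG => ?_
  obtain ⟨n, hn⟩ := hBG G hG
  exact (hB n).1.nonempty.mono (subset_inter hn (hB n).2)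

theorem PytkeevBi.exists_selection (hP : PytkeevBi t₁ t₂) {D F : ℕ → Set Y}
    (hD : ∀ n, (D n).Nonempty) (hF : ∀ n, (F n).Finite) (hFD : ∀ n, F n ⊆ D n) {e : Y}
    (he : e ∈ closure[t₁] (⋃ n, F n)) :
    ∃ d : ℕ → Y, (∀ n, d n ∈ D n) ∧ e ∈ closure[t₂] (range d) := by
  by_cases heF : e ∈ ⋃ n, F n
  · obtain ⟨m, hm⟩ := mem_iUnion.mp heF
    obtain ⟨d, hdD, hdm⟩ := exists_selection_extending hD
      (Function.injective_of_subsingleton fun _ : Unit => m) fun _ => hFD m hm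
    exact ⟨d, hdD, subset_closure ⟨m, hdm ()⟩⟩
  · obtain ⟨B, hB, hBG⟩ := hP _ e he heF
    obtain ⟨φ, hφ, hBF⟩ :=
      exists_strictMono_inter_nonempty (fun k => (hB k).1) hF fun k => (hB k).2
    choose b hbB hbF using hBF
    obtain ⟨d, hdD, hdb⟩ := exists_selection_extending hD hφ.injective fun k => hFD _ (hbF k)
    refine ⟨d, hdD, mem_closure_iff_nhds.mpr fun G hG => ?_⟩
    obtain ⟨k, hk⟩ := hBG G hG
    exact ⟨b k, hk (hbB k), φ k, hdb k⟩

theorem MSepBi.separableSpace_s15 (hM : MSepBi t₁ t₂) : @SeparableSpace Y t₂ := by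
  obtain ⟨F, hF, hFdense⟩ := hM (fun _ => univ) fun _ => @dense_univ Y t₁
  exact ⟨⋃ n, F n, countable_iUnion fun n => (hF n).1.countable, hFdense⟩

theorem MSepBi.exists_selection_of_pytkeevBi (hM : MSepBi t₁ t₂) (hP : PytkeevBi t₂ t₃)
    {D : ℕ → Set Y} (hD : ∀ n, @Dense Y t₁ (D n)) (e : Y) :
    ∃ d : ℕ → Y, (∀ n, d n ∈ D n) ∧ e ∈ closure[t₃] (range d) := by
  obtain ⟨F, hF, hFdense⟩ := hM D hD
  have hDne : ∀ n, (D n).Nonempty := fun n => (@Dense.nonempty_iff Y t₁ _ (hD n)).mpr ⟨e⟩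
  exact hP.exists_selection hDne (fun n => (hF n).1) (fun n => (hF n).2) (hFdense e)

theorem mSep_pytkeev_implies_rSep_single_general [Nonempty Y] (hM : MSepBi t₁ t₂)
    (hP : PytkeevBi t₂ t₃) : RSepBi t₁ t₃ := by
  intro D hD
  have := hM.separableSpace_s15
  obtain ⟨e, he⟩ := @exists_dense_seq Y t₂ _ _
  have he' : @DenseRange Y t₃ ℕ e := fun y => hP.closure_subset_closure _ (he y)
  choose d hdD hde using fun k =>
    hM.exists_selection_of_pytkeevBi hP (fun n => hD (Nat.pair k n)) (e k)
  refine ⟨fun n => d n.unpair.1 n.unpair.2, fun n => ?_, ?_⟩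
  · simpa only [Nat.pair_unpair] using hdD n.unpair.1 n.unpair.2
  · have hrange : ∀ k, range (d k) ⊆ range fun n : ℕ => d n.unpair.1 n.unpair.2 := by
      rintro k _ ⟨n, rfl⟩
      exact ⟨Nat.pair k n, by simp only [Nat.unpair_pair]⟩
    exact .of_closure (he'.mono (range_subset_iff.mpr fun k => closure_mono (hrange k) (hde k)))

end Bitopological

/-- For a Tychonoff separably `λ`-submetrizable space `X` and `λ ∈ Ψ`:
if `C_λ(X)` is M-separable and a Pytkeev space, then `C_λ(X)` is R-separable. -/
theorem mSep_pytkeev_implies_rSep_single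
    {X : Type*} [TopologicalSpace X] [T35Space X]
    (lam : Set (Set X)) (hlam : MemPsi lam)
    (hsm : SeparablyLamSubmetrizable X lam)
    (hM : MSepBi (setOpenTopology lam) (setOpenTopology lam))
    (hP : PytkeevBi (setOpenTopology lam) (setOpenTopology lam)) :
    RSepBi (setOpenTopology lam) (setOpenTopology lam) :=
  mSep_pytkeev_implies_rSep_single_general hM hP
end

section
/- Let X be a Tychonoff separably λ-submetrizable space and let λ, μ ∈ Ψ with μ ⊆ λ. Then the bitopological space (C(X), τ_μ, τ_λ) is H_{(τ_λ,τ_μ)}-separable if and only if for each sequence (𝒰_n : n ∈ ℕ) of λ-f-covers of X there is a sequence (𝒱_n : n ∈ ℕ) of finite sets such that 𝒱_n ⊆ 𝒰_n for each n, and each F ∈ μ is contained in an element of 𝒱_n for all but finitely many n ∈ ℕ. -/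
open Set Filter Topology TopologicalSpace ContinuousMap

/-! For a directed hereditary family `λ` of C-compact sets, the set-open topology is that of uniform
convergence on members of `λ`, so density in it means uniform approximability on each of them.

If `𝒰` is a cover of `λ`, the functions equal to `1` off some member of `𝒰` are dense, and such a
function lying in `[F, (-∞, 1)]` yields a member of `𝒰` containing `F`. Conversely, for a fixed `g`
and a dense set `D`, the cozero sets `{|d - g| < ε}` with `d ∈ D` cover `λ`, so the covering
property selects functions approximating `g`. A C-compact set on which a map into the Hilbert cube
is injective carries only functions that factor through the cube, so countably many `g` suffice, and
a diagonal union handles them simultaneously. -/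

section

variable {X Q : Type*} [TopologicalSpace X] [TopologicalSpace Q] {A : Set X}

namespace IsCCompact

lemma isClosed_image [MetrizableSpace Q] (hA : IsCCompact A) (e : C(X, Q)) :
    IsClosed (e '' A) := by
  let := metrizableSpaceMetric Q
  refine isClosed_of_closure_subset fun p hp => ?_
  let distTo : C(X, ℝ) := ⟨fun x => dist (e x) p, by fun_prop⟩
  have zero_mem_closure : (0 : ℝ) ∈ closure (distTo '' A) := by
    have hmaps : MapsTo (dist · p) (e '' A) (distTo '' A) := by
      rintro _ ⟨a, ha, rfl⟩
      exact ⟨a, ha, rfl⟩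
    simpa only [dist_self] using
      map_mem_closure (f := (dist · p)) (by fun_prop) hp hmaps
  rw [(hA distTo).isClosed.closure_eq] at zero_mem_closure
  obtain ⟨a, ha, hap⟩ := zero_mem_closure
  exact ⟨a, ha, dist_eq_zero.1 hap⟩

lemma isCompact_image_prodMk [MetrizableSpace Q] (hA : IsCCompact A) {e : C(X, Q)} {K : Set Q}
    (hK : IsCompact K) (he : MapsTo e A K) (f : C(X, ℝ)) : IsCompact (e.prodMk f '' A) := by
  refine (hK.prod (hA f)).of_isClosed_subset (hA.isClosed_image _) ?_
  rintro _ ⟨a, ha, rfl⟩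
  exact ⟨he ha, mem_image_of_mem f ha⟩

lemma inter_preimage (hA : IsCCompact A) (g : C(X, ℝ)) {C : Set ℝ} (hC : IsClosed C) :
    IsCCompact (A ∩ g ⁻¹' C) := by
  intro f
  have hcompact : IsCompact (g.prodMk f '' A ∩ Prod.fst ⁻¹' C) :=
    (hA.isCompact_image_prodMk (hA g) (mapsTo_image g A) f).inter_right
      (hC.preimage continuous_fst)
  rw [← image_inter_preimage] at hcompact
  simpa only [image_image] using! hcompact.image continuous_snd

/-- The graph of `f` over `e '' A` is compact, and the first projection embeds it in `Q`. -/
lemma exists_comp_eqOn [MetrizableSpace Q] [CompactSpace Q] (hA : IsCCompact A) {e : C(X, Q)}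
    (he : InjOn e A) (f : C(X, ℝ)) : ∃ φ : C(Q, ℝ), EqOn (φ.comp e) f A := by
  let graph : Set (Q × ℝ) := e.prodMk f '' A
  have : CompactSpace graph := isCompact_iff_compactSpace.1
    (hA.isCompact_image_prodMk isCompact_univ (mapsTo_univ e A) f)
  have fst_injective : Function.Injective fun p : graph => p.1.1 := by
    rintro ⟨_, a, ha, rfl⟩ ⟨_, b, hb, rfl⟩ hab
    exact Subtype.ext (congrArg (e.prodMk f) (he ha hb hab))
  obtain ⟨φ, hφ⟩ := ContinuousMap.exists_extension'
    (Continuous.isClosedEmbedding (by fun_prop) fst_injective)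
    (⟨fun p => p.1.2, by fun_prop⟩ : C(graph, ℝ))
  exact ⟨φ, fun a ha => congrFun hφ ⟨_, a, ha, rfl⟩⟩

lemma exists_eqOn_eqOn_one_compl (hA : IsCCompact A) {U : Set X} (hU : IsCozero U)
    (hAU : A ⊆ U) (g : C(X, ℝ)) : ∃ d : C(X, ℝ), EqOn d g A ∧ EqOn d 1 Uᶜ := by
  obtain ⟨f, rfl⟩ := hU
  obtain ⟨ψ, hψ0, hψ1, -⟩ := exists_continuous_zero_one_of_isClosed isClosed_singleton
    (hA f).isClosed (disjoint_singleton_left.2 fun ⟨_, ha, hfa⟩ => hAU ha hfa)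
  refine ⟨ψ.comp f * g + (1 - ψ.comp f), fun x hx => ?_, fun x hx => ?_⟩
  · have hx1 : ψ (f x) = 1 := hψ1 (mem_image_of_mem f hx)
    simp [hx1]
  · have hx0 : ψ (f x) = 0 := hψ0 (not_not.1 hx)
    simp [hx0]

end IsCCompact

lemma isCozero_setOf_dist_lt (d g : C(X, ℝ)) (ε : ℝ) : IsCozero {x | dist (d x) (g x) < ε} := by
  refine ⟨⟨fun x => max 0 (ε - dist (d x) (g x)), by fun_prop⟩, ?_⟩
  ext x
  simp

end

section

variable {X : Type*} {mu : Set (Set X)}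

/-- The sequence `𝒰` of families of sets has finite subfamilies such that each member of `mu` is
contained in an element of all but finitely many of them. -/
def HasFiniteGrouping (mu : Set (Set X)) (𝒰 : ℕ → Set (Set X)) : Prop :=
  ∃ 𝒱 : ℕ → Set (Set X), (∀ n, (𝒱 n).Finite ∧ 𝒱 n ⊆ 𝒰 n) ∧
    ∀ F ∈ mu, ∀ᶠ n in atTop, ∃ V ∈ 𝒱 n, F ⊆ V

lemma HasFiniteGrouping.exists_finite_subset {ι : Type*} {W : ℕ → ι → Set X} {D : ℕ → Set ι}
    (h : HasFiniteGrouping mu fun n => W n '' D n) :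
    ∃ S : ℕ → Set ι, (∀ n, (S n).Finite ∧ S n ⊆ D n) ∧
      ∀ F ∈ mu, ∀ᶠ n in atTop, ∃ d ∈ S n, F ⊆ W n d := by
  obtain ⟨𝒱, h𝒱, hgroup⟩ := h
  have hlift : ∀ n, ∃ S ⊆ D n, S.Finite ∧ 𝒱 n = W n '' S := fun n =>
    exists_subset_image_finite_and.1 ⟨𝒱 n, (h𝒱 n).2, (h𝒱 n).1, rfl⟩
  choose S hSD hSfin hS𝒱 using hlift
  refine ⟨S, fun n => ⟨hSfin n, hSD n⟩, fun F hF => (hgroup F hF).mono fun n hn => ?_⟩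
  rwa [hS𝒱, exists_mem_image] at hn

end

section

variable {X : Type*} [TopologicalSpace X] {lam mu : Set (Set X)}

lemma isOpen_setOf_image_subset {A : Set X} (hA : A ∈ lam) {U : Set ℝ} (hU : IsOpen U) :
    IsOpen[setOpenTopology lam] {f : C(X, ℝ) | f '' A ⊆ U} :=
  isOpen_generateFrom_of_mem ⟨A, hA, U, hU, rfl⟩

lemma setOpenTopology_anti (h : mu ⊆ lam) : setOpenTopology lam ≤ setOpenTopology mu :=
  generateFrom_anti fun _ ⟨A, hA, hS⟩ => ⟨A, h hA, hS⟩

lemma setOpenTopology_empty : setOpenTopology (∅ : Set (Set X)) = ⊤ :=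
  top_le_iff.1 (le_generateFrom fun _ ⟨_, hA, _⟩ => hA.elim)

lemma setOpenTopology_insert_union {A B : Set X} (hA : A ∈ lam) (hB : B ∈ lam) :
    setOpenTopology (insert (A ∪ B) lam) = setOpenTopology lam := by
  refine le_antisymm (setOpenTopology_anti (subset_insert _ _)) (le_generateFrom ?_)
  rintro _ ⟨F, rfl | hF, U, hU, rfl⟩
  · simp only [image_union, union_subset_iff, ofPred_and]
    let := setOpenTopology lam
    exact (isOpen_setOf_image_subset hA hU).inter (isOpen_setOf_image_subset hB hU)
  · exact isOpen_setOf_image_subset hF hU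

/-- A family of sets stable under nonempty traces on preimages of closed sets under real-valued
continuous functions: the part of the hereditary condition of `Ψ` that uniform approximation on
members of the family relies on. -/
def IsFunctionallyHereditary (lam : Set (Set X)) : Prop :=
  ∀ A ∈ lam, ∀ (g : C(X, ℝ)) (C : Set ℝ), IsClosed C → (A ∩ g ⁻¹' C).Nonempty → A ∩ g ⁻¹' C ∈ lam

namespace MemPsi

lemma union_mem (hlam : MemPsi lam) {A B : Set X} (hA : A ∈ lam) (hB : B ∈ lam) : A ∪ B ∈ lam :=
  hlam.maximal (insert (A ∪ B) lam)
    (forall_mem_insert.2 ⟨(hlam.nonempty A hA).inl, hlam.nonempty⟩)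
    (setOpenTopology_insert_union hA hB) (mem_insert _ _)

lemma directedOn (hlam : MemPsi lam) : DirectedOn (· ⊆ ·) lam := fun A hA B hB =>
  ⟨A ∪ B, hlam.union_mem hA hB, subset_union_left, subset_union_right⟩

lemma isFunctionallyHereditary (hlam : MemPsi lam) : IsFunctionallyHereditary lam :=
  fun A hA g _ hC hne => hlam.hereditary A hA _ inter_subset_left hne
    ((hlam.closed A hA).inter (hC.preimage g.continuous)) ((hlam.ccompact A hA).inter_preimage g hC)

end MemPsi

/-- The set `⟨g, A, ε⟩` of the functions that are pointwise `ε`-close to `g` on `A`; no uniform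
bound below `ε` is required. -/
def uniformBall (g : C(X, ℝ)) (A : Set X) (ε : ℝ) : Set C(X, ℝ) :=
  {h | ∀ x ∈ A, dist (h x) (g x) < ε}

lemma uniformBall_subset_uniformBall (g : C(X, ℝ)) {A B : Set X} (hAB : A ⊆ B) {δ ε : ℝ}
    (hδε : δ ≤ ε) : uniformBall g B δ ⊆ uniformBall g A ε :=
  fun _ hh x hx => (hh x (hAB hx)).trans_le hδε

lemma mem_uniformBall_trans {f g h : C(X, ℝ)} {A : Set X} {δ ε : ℝ} (hf : f ∈ uniformBall g A δ)
    (hg : g ∈ uniformBall h A ε) : f ∈ uniformBall h A (δ + ε) :=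
  fun x hx => (dist_triangle _ (g x) _).trans_lt (add_lt_add (hf x hx) (hg x hx))

lemma exists_uniformBall_subset_of_isOpen (hne : lam.Nonempty) (hdir : DirectedOn (· ⊆ ·) lam)
    (hcc : ∀ A ∈ lam, IsCCompact A) {G : Set C(X, ℝ)} (hG : IsOpen[setOpenTopology lam] G) :
    ∀ g ∈ G, ∃ A ∈ lam, ∃ ε > 0, uniformBall g A ε ⊆ G := by
  induction hG with
  | basic S hS =>
    obtain ⟨A, hA, U, hU, rfl⟩ := hS
    intro g hg
    obtain ⟨ε, hε, hthick⟩ := (hcc A hA g).exists_thickening_subset_open hU hg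
    refine ⟨A, hA, ε, hε, fun h hh => image_subset_iff.2 fun x hx => hthick ?_⟩
    exact Metric.mem_thickening_iff.2 ⟨g x, mem_image_of_mem g hx, hh x hx⟩
  | univ =>
    obtain ⟨A, hA⟩ := hne
    exact fun _ _ => ⟨A, hA, 1, one_pos, subset_univ _⟩
  | inter S T _ _ ihS ihT =>
    rintro g ⟨hgS, hgT⟩
    obtain ⟨A, hA, ε, hε, hballS⟩ := ihS g hgS
    obtain ⟨B, hB, δ, hδ, hballT⟩ := ihT g hgT
    obtain ⟨C, hC, hAC, hBC⟩ := hdir A hA B hB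
    exact ⟨C, hC, min ε δ, lt_min hε hδ, subset_inter
      ((uniformBall_subset_uniformBall g hAC (min_le_left _ _)).trans hballS)
      ((uniformBall_subset_uniformBall g hBC (min_le_right _ _)).trans hballT)⟩
  | sUnion S _ ih =>
    rintro g ⟨T, hT, hgT⟩
    obtain ⟨A, hA, ε, hε, hball⟩ := ih T hT g hgT
    exact ⟨A, hA, ε, hε, hball.trans (subset_sUnion_of_mem hT)⟩

lemma exists_isOpen_subset_uniformBall (hher : IsFunctionallyHereditary lam) {A : Set X}
    (hA : A ∈ lam) (hAcc : IsCCompact A) (g : C(X, ℝ)) {ε : ℝ} (hε : 0 < ε) :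
    ∃ G, IsOpen[setOpenTopology lam] G ∧ g ∈ G ∧ G ⊆ uniformBall g A ε := by
  have hε3 : 0 < ε / 3 := by positivity
  obtain ⟨t, htA, ht, hcover⟩ := (hAcc g).finite_cover_balls hε3
  let piece (c : ℝ) : Set X := A ∩ g ⁻¹' Metric.closedBall c (ε / 3)
  have piece_mem : ∀ c ∈ t, piece c ∈ lam := by
    intro c hc
    obtain ⟨a, ha, rfl⟩ := htA hc
    exact hher A hA g _ Metric.isClosed_closedBall
      ⟨a, ha, Metric.mem_closedBall_self hε3.le⟩
  refine ⟨⋂ c ∈ t, {f : C(X, ℝ) | f '' piece c ⊆ Metric.ball c (2 * ε / 3)}, ?_, ?_, ?_⟩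
  · let := setOpenTopology lam
    exact ht.isOpen_biInter fun c hc =>
      isOpen_setOf_image_subset (piece_mem c hc) Metric.isOpen_ball
  · refine mem_iInter₂.2 fun c _ => image_subset_iff.2 fun x hx => ?_
    exact Metric.closedBall_subset_ball (by linarith) hx.2
  · intro f hf x hx
    obtain ⟨c, hc, hxc⟩ := mem_iUnion₂.1 (hcover (mem_image_of_mem g hx))
    have hfc : dist (f x) c < 2 * ε / 3 :=
      mem_iInter₂.1 hf c hc (mem_image_of_mem f ⟨hx, Metric.ball_subset_closedBall hxc⟩)
    have hgc : dist (g x) c < ε / 3 := hxc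
    linarith [dist_triangle_right (f x) (g x) c]

/-- Density of `D` in `C(X)` for uniform convergence on the members of `lam`. Members are treated
one at a time, so this is density in a topology only for directed families. -/
def UniformlyDenseOn (lam : Set (Set X)) (D : Set C(X, ℝ)) : Prop :=
  ∀ g, ∀ A ∈ lam, ∀ ε > 0, (uniformBall g A ε ∩ D).Nonempty

namespace UniformlyDenseOn

variable {D : Set C(X, ℝ)}

lemma of_dense (hher : IsFunctionallyHereditary lam) (hcc : ∀ A ∈ lam, IsCCompact A)
    (hD : @Dense _ (setOpenTopology lam) D) : UniformlyDenseOn lam D := by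
  intro g A hA ε hε
  obtain ⟨G, hG, hgG, hGball⟩ := exists_isOpen_subset_uniformBall hher hA (hcc A hA) g hε
  let := setOpenTopology lam
  exact (hD.inter_open_nonempty G hG ⟨g, hgG⟩).mono (inter_subset_inter_left D hGball)

lemma dense (hD : UniformlyDenseOn lam D) (hne : lam.Nonempty) (hdir : DirectedOn (· ⊆ ·) lam)
    (hcc : ∀ A ∈ lam, IsCCompact A) : @Dense _ (setOpenTopology lam) D := by
  let := setOpenTopology lam
  refine dense_iff_inter_open.2 fun G hG ⟨g, hg⟩ => ?_
  obtain ⟨A, hA, ε, hε, hball⟩ := exists_uniformBall_subset_of_isOpen hne hdir hcc hG g hg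
  exact (hD g A hA ε hε).mono (inter_subset_inter_left D hball)

end UniformlyDenseOn

lemma uniformlyDenseOn_setOf_eqOn_one_compl (hcc : ∀ A ∈ lam, IsCCompact A) {𝒰 : Set (Set X)}
    (h𝒰 : IsFCover lam 𝒰) : UniformlyDenseOn lam {d | ∃ U ∈ 𝒰, EqOn d 1 Uᶜ} := by
  intro g A hA ε hε
  obtain ⟨U, hU, hAU⟩ := h𝒰.2.2 A hA
  obtain ⟨d, hdg, hd1⟩ := (hcc A hA).exists_eqOn_eqOn_one_compl (h𝒰.2.1 U hU) hAU g
  refine ⟨d, fun x hx => ?_, U, hU, hd1⟩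
  rwa [hdg hx, dist_self]

lemma exists_uniformlyDenseOn_range_seq (hcc : ∀ A ∈ lam, IsCCompact A)
    (hsm : SeparablyLamSubmetrizable X lam) :
    ∃ g : ℕ → C(X, ℝ), UniformlyDenseOn lam (range g) := by
  obtain ⟨Y, _, _, p, hp, -, hpinj⟩ := hsm
  obtain ⟨ι, hι⟩ := Metric.PiNatEmbed.exists_embedding_to_hilbert_cube (X := Y)
  let e : C(X, ℕ → unitInterval) := ⟨ι ∘ p, hι.continuous.comp hp⟩
  let g (k : ℕ) : C(X, ℝ) := (denseSeq C(ℕ → unitInterval, ℝ) k).comp e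
  refine ⟨g, fun h A hA ε hε => ?_⟩
  have he : InjOn e A := hι.injective.comp_injOn (hpinj.mono (subset_sUnion_of_mem hA))
  obtain ⟨φ, hφ⟩ := (hcc A hA).exists_comp_eqOn he h
  obtain ⟨k, hk⟩ := (denseRange_denseSeq C(ℕ → unitInterval, ℝ)).exists_dist_lt φ hε
  refine ⟨g k, fun x hx => ?_, mem_range_self k⟩
  rw [← hφ hx, dist_comm]
  exact (ContinuousMap.dist_apply_le_dist (e x)).trans_lt hk

/-- The condition `X ∉ 𝒰 n` in the definition of f-covers costs nothing: where it fails, `{X}` is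
selected, and any other member of the sequence is put in the place of `𝒰 n`. -/
lemma hasFiniteGrouping_of_forall_isFCover
    (H : ∀ 𝒰 : ℕ → Set (Set X), (∀ n, IsFCover lam (𝒰 n)) → HasFiniteGrouping mu 𝒰)
    {𝒰 : ℕ → Set (Set X)} (hcoz : ∀ n, ∀ U ∈ 𝒰 n, IsCozero U)
    (hcov : ∀ n, ∀ A ∈ lam, ∃ U ∈ 𝒰 n, A ⊆ U) : HasFiniteGrouping mu 𝒰 := by
  classical
  by_cases hall : ∀ n, univ ∈ 𝒰 n
  · exact ⟨fun _ => {univ}, fun n => ⟨finite_singleton _, singleton_subset_iff.2 (hall n)⟩,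
      fun F _ => Eventually.of_forall fun n => ⟨univ, rfl, subset_univ F⟩⟩
  push Not at hall
  obtain ⟨m, hm⟩ := hall
  have hreplaced : ∀ n, IsFCover lam (if univ ∈ 𝒰 n then 𝒰 m else 𝒰 n) := by
    intro n
    split_ifs with hn
    exacts [⟨hm, hcoz m, hcov m⟩, ⟨hn, hcoz n, hcov n⟩]
  obtain ⟨𝒱, h𝒱, hgroup⟩ := H _ hreplaced
  refine ⟨fun n => if univ ∈ 𝒰 n then {univ} else 𝒱 n, fun n => ?_, fun F hF => ?_⟩
  · by_cases hn : univ ∈ 𝒰 n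
    · simp [hn]
    · simpa only [hn, if_false] using h𝒱 n
  · filter_upwards [hgroup F hF] with n hFn
    by_cases hn : univ ∈ 𝒰 n
    · simp [hn]
    · simpa only [hn, if_false] using hFn

lemma hSepBi_setOpenTopology_empty (t : TopologicalSpace C(X, ℝ)) :
    HSepBi t (setOpenTopology ∅) := by
  intro D hD
  choose d hd using fun n => (hD n).nonempty
  refine ⟨fun n => {d n}, fun n => ⟨finite_singleton _, singleton_subset_iff.2 (hd n)⟩,
    fun G hG hGne => ?_⟩
  rw [setOpenTopology_empty, isOpen_top_iff] at hG
  rw [hG.resolve_left hGne.ne_empty]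
  exact Eventually.of_forall fun n => ⟨d n, mem_univ _, rfl⟩

theorem HSepBi.hasFiniteGrouping (H : HSepBi (setOpenTopology lam) (setOpenTopology mu))
    (hne : lam.Nonempty) (hdir : DirectedOn (· ⊆ ·) lam) (hcc : ∀ A ∈ lam, IsCCompact A)
    {𝒰 : ℕ → Set (Set X)} (h𝒰 : ∀ n, IsFCover lam (𝒰 n)) : HasFiniteGrouping mu 𝒰 := by
  obtain ⟨S, hS, hmeet⟩ := H (fun n => {d | ∃ U ∈ 𝒰 n, EqOn d 1 Uᶜ}) fun n =>
    (uniformlyDenseOn_setOf_eqOn_one_compl hcc (h𝒰 n)).dense hne hdir hcc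
  have hS𝒰 : ∀ n, ∀ d ∈ S n, ∃ U ∈ 𝒰 n, EqOn d 1 Uᶜ := fun n _ hd => (hS n).2 hd
  choose! U hU𝒰 hU1 using hS𝒰
  refine ⟨fun n => U n '' S n, fun n => ⟨(hS n).1.image _, image_subset_iff.2 (hU𝒰 n)⟩,
    fun F hF => ?_⟩
  have zero_mem : (0 : C(X, ℝ)) ∈ {f : C(X, ℝ) | f '' F ⊆ Iio 1} :=
    image_subset_iff.2 fun _ _ => zero_lt_one (α := ℝ)
  filter_upwards [hmeet _ (isOpen_setOf_image_subset hF isOpen_Iio) ⟨0, zero_mem⟩]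
    with n ⟨d, hdF, hd⟩
  refine ⟨U n d, mem_image_of_mem _ hd, fun x hx => ?_⟩
  by_contra hxU
  exact (hdF (mem_image_of_mem d hx)).ne (hU1 n d hd hxU)

/-- The sets `S n` eventually approximate `g` uniformly on each member of `mu`: every `⟨g, F, ε⟩`
with `F ∈ mu` meets all but finitely many of them, as H-separability asks of its selection. -/
def EventuallyApproximate (mu : Set (Set X)) (S : ℕ → Set C(X, ℝ)) (g : C(X, ℝ)) : Prop :=
  ∀ F ∈ mu, ∀ ε > 0, ∀ᶠ n in atTop, (uniformBall g F ε ∩ S n).Nonempty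

lemma exists_finite_eventuallyApproximate
    (H : ∀ 𝒰 : ℕ → Set (Set X), (∀ n, IsFCover lam (𝒰 n)) → HasFiniteGrouping mu 𝒰)
    {D : ℕ → Set C(X, ℝ)} (hD : ∀ n, UniformlyDenseOn lam (D n)) (g : C(X, ℝ)) :
    ∃ S : ℕ → Set C(X, ℝ), (∀ n, (S n).Finite ∧ S n ⊆ D n) ∧ EventuallyApproximate mu S g := by
  let W (n : ℕ) (d : C(X, ℝ)) : Set X := {x | dist (d x) (g x) < 1 / ((n : ℝ) + 1)}
  have hgroup : HasFiniteGrouping mu fun n => W n '' D n := by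
    refine hasFiniteGrouping_of_forall_isFCover H ?_ fun n A hA => ?_
    · rintro n _ ⟨d, -, rfl⟩
      exact isCozero_setOf_dist_lt d g _
    · obtain ⟨d, hdA, hd⟩ := hD n g A hA _ (Nat.one_div_pos_of_nat (n := n))
      exact ⟨W n d, mem_image_of_mem _ hd, hdA⟩
  obtain ⟨S, hS, hSW⟩ := hgroup.exists_finite_subset
  refine ⟨S, hS, fun F hF ε hε => ?_⟩
  obtain ⟨N, hN⟩ := exists_nat_one_div_lt hε
  filter_upwards [hSW F hF, eventually_ge_atTop N] with n ⟨d, hd, hFW⟩ hNn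
  exact ⟨d, fun x hx => (hFW hx).trans ((Nat.one_div_le_one_div hNn).trans_lt hN), hd⟩

lemma EventuallyApproximate.biUnion {S : ℕ → ℕ → Set C(X, ℝ)} {g : ℕ → C(X, ℝ)}
    (hS : ∀ k, EventuallyApproximate mu (S k) (g k)) (hg : UniformlyDenseOn mu (range g))
    (h : C(X, ℝ)) : EventuallyApproximate mu (fun n => ⋃ k ∈ Iic n, S k n) h := by
  intro F hF ε hε
  obtain ⟨_, hgk, k, rfl⟩ := hg h F hF (ε / 2) (half_pos hε)
  filter_upwards [hS k F hF (ε / 2) (half_pos hε), eventually_ge_atTop k] with n ⟨d, hdg, hd⟩ hkn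
  refine ⟨d, ?_, mem_biUnion (mem_Iic.2 hkn) hd⟩
  simpa only [add_halves] using mem_uniformBall_trans hdg hgk

theorem hSepBi_of_forall_hasFiniteGrouping
    (H : ∀ 𝒰 : ℕ → Set (Set X), (∀ n, IsFCover lam (𝒰 n)) → HasFiniteGrouping mu 𝒰)
    (hcc : ∀ A ∈ lam, IsCCompact A) (hher : IsFunctionallyHereditary lam) (hmune : mu.Nonempty)
    (hmudir : DirectedOn (· ⊆ ·) mu) (hmucc : ∀ A ∈ mu, IsCCompact A) {g : ℕ → C(X, ℝ)}
    (hg : UniformlyDenseOn mu (range g)) : HSepBi (setOpenTopology lam) (setOpenTopology mu) := by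
  intro D hD
  choose S hS happrox using fun k =>
    exists_finite_eventuallyApproximate H (fun n => .of_dense hher hcc (hD n)) (g k)
  refine ⟨fun n => ⋃ k ∈ Iic n, S k n, fun n => ⟨?_, iUnion₂_subset fun k _ => (hS k n).2⟩, ?_⟩
  · exact (finite_Iic n).biUnion fun k _ => (hS k n).1
  · rintro G hG ⟨h, hh⟩
    obtain ⟨F, hF, ε, hε, hball⟩ :=
      exists_uniformBall_subset_of_isOpen hmune hmudir hmucc hG h hh
    exact (EventuallyApproximate.biUnion happrox hg h F hF ε hε).mono fun n hn =>
      hn.mono (inter_subset_inter_left _ hball)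

theorem hSep_iff_fCover_grouping_general (hdir : DirectedOn (· ⊆ ·) lam)
    (hcc : ∀ A ∈ lam, IsCCompact A) (hher : IsFunctionallyHereditary lam)
    (hmudir : DirectedOn (· ⊆ ·) mu) (hsub : mu ⊆ lam) (hsm : SeparablyLamSubmetrizable X lam) :
    HSepBi (setOpenTopology lam) (setOpenTopology mu) ↔
      ∀ 𝒰 : ℕ → Set (Set X), (∀ n, IsFCover lam (𝒰 n)) → HasFiniteGrouping mu 𝒰 := by
  rcases mu.eq_empty_or_nonempty with rfl | hmune
  · exact iff_of_true (hSepBi_setOpenTopology_empty _) fun 𝒰 _ => ⟨fun _ => ∅, by simp⟩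
  refine ⟨fun H 𝒰 h𝒰 => H.hasFiniteGrouping (hmune.mono hsub) hdir hcc h𝒰, fun H => ?_⟩
  obtain ⟨g, hg⟩ := exists_uniformlyDenseOn_range_seq hcc hsm
  exact hSepBi_of_forall_hasFiniteGrouping H hcc hher hmune hmudir (fun A hA => hcc A (hsub hA))
    fun h A hA => hg h A (hsub hA)

end

/-- For a Tychonoff separably `λ`-submetrizable space `X` and `λ, μ ∈ Ψ` with
`μ ⊆ λ`: `(C(X), τ_μ, τ_λ)` is `H_{(τ_λ,τ_μ)}`-separable iff for each sequence of `λ`-f-covers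
of `X` there are finite subfamilies such that each `F ∈ μ` is contained in an element of `𝒱_n`
for all but finitely many `n`. -/
theorem hSep_iff_fCover_grouping
    {X : Type*} [TopologicalSpace X] [T35Space X]
    (lam mu : Set (Set X)) (hlam : MemPsi lam) (hmu : MemPsi mu) (hsub : mu ⊆ lam)
    (hsm : SeparablyLamSubmetrizable X lam) :
    HSepBi (setOpenTopology lam) (setOpenTopology mu) ↔
      (∀ 𝒰 : ℕ → Set (Set X), (∀ n, IsFCover lam (𝒰 n)) →
        ∃ 𝒱 : ℕ → Set (Set X), (∀ n, (𝒱 n).Finite ∧ 𝒱 n ⊆ 𝒰 n) ∧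
          ∀ F ∈ mu, ∀ᶠ n in Filter.atTop, ∃ V ∈ 𝒱 n, F ⊆ V) :=
  hSep_iff_fCover_grouping_general hlam.directedOn hlam.ccompact hlam.isFunctionallyHereditary
    hmu.directedOn hsub hsm
end
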